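/- Let q be a real number with 0 < q and q ≠ 1, let h₁, h₂, α₁, λ be real numbers and t₁, t₂ nonzero reals. Assume λ + α₁ = -N for some positive integer N (so (q^{λ+α₁};q)_n = 0 for all n > N and the series below is a finite sum). Then the function g(x) = x^{-α₁} · Σ_{n=0}^{N} (q^{-λ-α₁+1/2}/x)^n · (q^{λ+α₁};q)_n · Σ_{ℓ=0}^{n} q^{-ℓ(n-ℓ)} · (q^{h₁}t₁)^{n-ℓ} · (q^{h₂}t₂)^{ℓ} / ((q;q)_{n-ℓ}(q;q)_ℓ) satisfies the variant of the confluent q-hypergeometric equation of type (0,2) for all x > 0. -/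

import Mathlib

/-- The finite q-shifted factorial `(a;q)_n = ∏_{i=0}^{n-1} (1 - a q^i)`. -/
noncomputable def qPoch (q a : ℝ) (n : ℕ) : ℝ :=
  ∏ i ∈ Finset.range n, (1 - a * q ^ i)

/-- The variant of the confluent q-hypergeometric equation of type (0,2) (for `x > 0`). -/
def confEq02 (q h₁ h₂ α₁ lam t₁ t₂ : ℝ) (g : ℝ → ℝ) : Prop :=
  ∀ x : ℝ, 0 < x →
    g (q * x)
    + q ^ (2 * lam + 1) * (1 - q ^ (-h₁ - 1/2) * t₁⁻¹ * x) * (1 - q ^ (-h₂ - 1/2) * t₂⁻¹ * x)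
        * g (x / q)
    - (q ^ (α₁ + 2 * lam - h₁ - h₂) * t₁⁻¹ * t₂⁻¹ * x ^ 2
        - q ^ (lam + 1/2) * (q ^ (-h₁) * t₁⁻¹ + q ^ (-h₂) * t₂⁻¹) * x
        + q ^ lam * (q + 1)) * g x = 0

noncomputable def cT (q A B : ℝ) (k l : ℕ) : ℝ :=
  (q⁻¹) ^ (k * l) * A ^ k * B ^ l / (qPoch q q k * qPoch q q l)

noncomputable def sT (q A B : ℝ) (n : ℕ) : ℝ :=
  ∑ z ∈ Finset.HasAntidiagonal.antidiagonal n, cT q A B z.1 z.2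

lemma one_sub_ne {q : ℝ} (hq : 0 < q) (hq1 : q ≠ 1) (k : ℕ) : 1 - q ^ (k + 1) ≠ 0 := by
  intro h
  have h1 : q ^ (k + 1) = 1 := by linarith
  exact hq1 ((pow_eq_one_iff_of_nonneg hq.le (by omega)).1 h1)

lemma qPoch_succ' (q a : ℝ) (n : ℕ) : qPoch q a (n + 1) = qPoch q a n * (1 - a * q ^ n) := by
  simp [qPoch, Finset.prod_range_succ]

lemma qPoch_ne {q : ℝ} (hq : 0 < q) (hq1 : q ≠ 1) (k : ℕ) : qPoch q q k ≠ 0 := by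
  induction k with
  | zero => simp [qPoch]
  | succ k ih =>
    rw [qPoch_succ']
    have := one_sub_ne hq hq1 k
    rw [pow_succ'] at this
    exact mul_ne_zero ih this

lemma cT_left {q : ℝ} (hq : 0 < q) (hq1 : q ≠ 1) (A B : ℝ) (k l : ℕ) :
    (1 - q ^ (k + 1)) * cT q A B (k + 1) l = A * (q⁻¹) ^ l * cT q A B k l := by
  have h1 := one_sub_ne hq hq1 k
  have h2 := qPoch_ne hq hq1 k
  have h3 := qPoch_ne hq hq1 l
  rw [pow_succ'] at h1 ⊢
  unfold cT
  rw [qPoch_succ', show (k + 1) * l = k * l + l by ring, pow_add, pow_succ A]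
  field_simp

lemma cT_right {q : ℝ} (hq : 0 < q) (hq1 : q ≠ 1) (A B : ℝ) (k l : ℕ) :
    (1 - q ^ (l + 1)) * cT q A B k (l + 1) = B * (q⁻¹) ^ k * cT q A B k l := by
  have h1 := one_sub_ne hq hq1 l
  have h2 := qPoch_ne hq hq1 k
  have h3 := qPoch_ne hq hq1 l
  rw [pow_succ'] at h1 ⊢
  unfold cT
  rw [qPoch_succ', show k * (l + 1) = k * l + k by ring, pow_add, pow_succ B]
  field_simp

lemma sT_step {q : ℝ} (hq : 0 < q) (hq1 : q ≠ 1) (A B : ℝ) (m : ℕ) :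
    (1 - q ^ (m + 1)) * sT q A B (m + 1) = B * sT q A B m
      + A * ∑ z ∈ Finset.HasAntidiagonal.antidiagonal m, (q⁻¹) ^ z.2 * cT q A B z.1 z.2 := by
  have e : (1 - q ^ (m + 1)) * sT q A B (m + 1) =
      ∑ z ∈ Finset.HasAntidiagonal.antidiagonal (m + 1), (1 - q ^ z.1) * cT q A B z.1 z.2
      + ∑ z ∈ Finset.HasAntidiagonal.antidiagonal (m + 1), q ^ z.1 * ((1 - q ^ z.2) * cT q A B z.1 z.2) := by
    rw [sT, Finset.mul_sum, ← Finset.sum_add_distrib]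
    refine Finset.sum_congr rfl fun z hz => ?_
    rw [← Finset.HasAntidiagonal.mem_antidiagonal.1 hz, pow_add]
    ring
  rw [e, Finset.Nat.sum_antidiagonal_succ, Finset.Nat.sum_antidiagonal_succ']
  simp only [cT_left hq hq1, cT_right hq hq1]
  simp only [pow_zero, sub_self, zero_mul, mul_zero, zero_add, add_zero, sT, Finset.mul_sum]
  rw [add_comm]
  congr 1
  · refine Finset.sum_congr rfl fun z _ => ?_
    have : q ^ z.1 ≠ 0 := by positivity
    rw [inv_pow]
    field_simp
  · refine Finset.sum_congr rfl fun z _ => ?_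
    exact mul_assoc _ _ _

lemma tT_step {q : ℝ} (hq : 0 < q) (hq1 : q ≠ 1) (A B : ℝ) (m : ℕ) :
    ∑ z ∈ Finset.HasAntidiagonal.antidiagonal (m + 1), (q⁻¹) ^ z.2 * cT q A B z.1 z.2
      = sT q A B (m + 1) + B * (q⁻¹) ^ (m + 1) * sT q A B m := by
  have e : ∑ z ∈ Finset.HasAntidiagonal.antidiagonal (m + 1), (q⁻¹) ^ z.2 * cT q A B z.1 z.2
      = sT q A B (m + 1) + ∑ z ∈ Finset.HasAntidiagonal.antidiagonal (m + 1),
        (q⁻¹) ^ z.2 * ((1 - q ^ z.2) * cT q A B z.1 z.2) := by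
    rw [sT, ← Finset.sum_add_distrib]
    refine Finset.sum_congr rfl fun z hz => ?_
    have : q ^ z.2 ≠ 0 := by positivity
    rw [inv_pow]
    field_simp
    ring
  rw [e, Finset.Nat.sum_antidiagonal_succ']
  simp only [cT_right hq hq1]
  simp only [pow_zero, sub_self, zero_mul, mul_zero, add_zero, zero_add]
  congr 1
  rw [sT, Finset.mul_sum]
  refine Finset.sum_congr rfl fun z hz => ?_
  rw [← Finset.HasAntidiagonal.mem_antidiagonal.1 hz]
  ring

lemma sT_rec {q : ℝ} (hq : 0 < q) (hq1 : q ≠ 1) (A B : ℝ) (m : ℕ) :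
    (1 - q ^ (m + 2)) * sT q A B (m + 2) = (A + B) * sT q A B (m + 1)
      + A * B * (q⁻¹) ^ (m + 1) * sT q A B m := by
  rw [sT_step hq hq1 A B (m + 1), tT_step hq hq1]
  ring

lemma sT_one {q : ℝ} (hq : 0 < q) (hq1 : q ≠ 1) (A B : ℝ) :
    (1 - q) * sT q A B 1 = (A + B) * sT q A B 0 := by
  have := sT_step hq hq1 A B 0
  simp [sT] at this ⊢
  rw [this]
  ring

noncomputable def vT (q p a A B x : ℝ) (n : ℕ) : ℝ :=
  (p / a / x) ^ n * qPoch q a n * sT q A B n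

lemma vT_rec {q p a A B x : ℝ} (hq : 0 < q) (hq1 : q ≠ 1) (hp : p * p = q) (ha : a ≠ 0)
    (hA : A ≠ 0) (hB : B ≠ 0) (hx : x ≠ 0) (n : ℕ) :
    a / (A * B) * (q ^ (n + 2) - 1) * x ^ 2 * vT q p a A B x (n + 2)
    + (1 / A + 1 / B) * p * (1 - a * q ^ (n + 1)) * x * vT q p a A B x (n + 1)
    + (q⁻¹) ^ n / a * (1 - a * q ^ n) * (1 - a * q ^ (n + 1)) * vT q p a A B x n = 0 := by
  have h := sT_rec hq hq1 A B n
  have h' : (q ^ (n + 2) - 1) * sT q A B (n + 2) = - ((A + B) * sT q A B (n + 1)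
      + A * B * (q⁻¹) ^ (n + 1) * sT q A B n) := by rw [← h]; ring
  unfold vT
  rw [show n + 2 = (n + 1) + 1 from rfl, qPoch_succ', qPoch_succ'] at *
  rw [pow_succ (p / a / x) (n + 1), pow_succ (p / a / x) n]
  generalize hw : (p / a / x) ^ n = w
  generalize sT q A B (n + 1 + 1) = s2 at *
  generalize sT q A B (n + 1) = s1 at *
  generalize sT q A B n = s0 at *
  generalize qPoch q a n = Q at *
  have hp0 : p ≠ 0 := by rintro rfl; simp at hp; exact hq.ne hp
  have e : a / (A * B) * (q ^ (n + 1 + 1) - 1) * x ^ 2 * (w * (p / a / x) * (p / a / x) *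
      (Q * (1 - a * q ^ n) * (1 - a * q ^ (n + 1))) * s2) =
      a / (A * B) * x ^ 2 * (w * (p / a / x) * (p / a / x) *
      (Q * (1 - a * q ^ n) * (1 - a * q ^ (n + 1)))) * ((q ^ (n + 1 + 1) - 1) * s2) := by ring
  rw [e, h', pow_succ q⁻¹ n]
  generalize (q⁻¹) ^ n = r
  generalize (1 - a * q ^ (n + 1)) = z1
  generalize (1 - a * q ^ n) = z0
  subst hp
  field_simp
  ring

lemma vT_rec0 {q p a A B x : ℝ} (hq : 0 < q) (hq1 : q ≠ 1) (hp : p * p = q) (ha : a ≠ 0)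
    (hA : A ≠ 0) (hB : B ≠ 0) (hx : x ≠ 0) :
    a / (A * B) * (q - 1) * x ^ 2 * vT q p a A B x 1
    + (1 / A + 1 / B) * p * (1 - a) * x * vT q p a A B x 0 = 0 := by
  have h := sT_one hq hq1 A B
  have h' : (q - 1) * sT q A B 1 = - ((A + B) * sT q A B 0) := by rw [← h]; ring
  have e : a / (A * B) * (q - 1) * x ^ 2 * vT q p a A B x 1 =
     a / (A * B) * x ^ 2 * (p / a / x) * (1 - a) * ((q - 1) * sT q A B 1) := by
    simp [vT, qPoch]; ring
  rw [e, h']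
  simp [vT, qPoch]
  field_simp
  ring

lemma vT_sum {q p a A B x : ℝ} (hq : 0 < q) (hq1 : q ≠ 1) (hp : p * p = q) (ha : a ≠ 0)
    (hA : A ≠ 0) (hB : B ≠ 0) (hx : x ≠ 0) (M : ℕ) :
    ∑ n ∈ Finset.range (M + 1), (a / (A * B) * (q ^ n - 1) * x ^ 2
      + (1 / A + 1 / B) * p * (1 - a * q ^ n) * x
      + (q⁻¹) ^ n / a * (1 - a * q ^ n) * (1 - a * q ^ (n + 1))) * vT q p a A B x n
    = - (a / (A * B) * (q ^ (M + 1) - 1) * x ^ 2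
      + (1 / A + 1 / B) * p * (1 - a * q ^ (M + 1)) * x) * vT q p a A B x (M + 1)
      - a / (A * B) * (q ^ (M + 2) - 1) * x ^ 2 * vT q p a A B x (M + 2) := by
  induction M with
  | zero =>
    have h0 := vT_rec0 hq hq1 hp ha hA hB hx
    have h1 := vT_rec hq hq1 hp ha hA hB hx 0
    simp at h0 h1 ⊢
    linear_combination h0 + h1
  | succ M ih =>
    rw [Finset.sum_range_succ, ih]
    have h1 := vT_rec hq hq1 hp ha hA hB hx (M + 1)
    linear_combination h1

lemma qPoch_zero_of {q a : ℝ} {N n : ℕ} (h : a * q ^ N = 1) (hn : N < n) : qPoch q a n = 0 := by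
  unfold qPoch
  exact Finset.prod_eq_zero (Finset.mem_range.2 hn) (by rw [h]; ring)

theorem stmt8 (q h₁ h₂ α₁ lam t₁ t₂ : ℝ) (N : ℕ)
    (hq : 0 < q) (hq1 : q ≠ 1) (ht₁ : t₁ ≠ 0) (ht₂ : t₂ ≠ 0)
    (hN : 0 < N) (hNlam : lam + α₁ = -(N : ℝ)) :
    confEq02 q h₁ h₂ α₁ lam t₁ t₂ (fun x =>
      x ^ (-α₁) * ∑ n ∈ Finset.range (N + 1),
        (q ^ (-lam - α₁ + 1/2) / x) ^ n * qPoch q (q ^ (lam + α₁)) n *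
          ∑ l ∈ Finset.range (n + 1),
            q ^ (-(l : ℝ) * ((n : ℝ) - (l : ℝ))) * (q ^ h₁ * t₁) ^ (n - l) *
              (q ^ h₂ * t₂) ^ l / (qPoch q q (n - l) * qPoch q q l)) := by
  have hS : ∀ n : ℕ, ∑ l ∈ Finset.range (n + 1),
            q ^ (-(l : ℝ) * ((n : ℝ) - (l : ℝ))) * (q ^ h₁ * t₁) ^ (n - l) *
              (q ^ h₂ * t₂) ^ l / (qPoch q q (n - l) * qPoch q q l)
      = sT q (q ^ h₁ * t₁) (q ^ h₂ * t₂) n := by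
    intro n
    rw [sT, ← Finset.Nat.sum_antidiagonal_swap, Finset.Nat.sum_antidiagonal_eq_sum_range_succ_mk]
    refine Finset.sum_congr rfl fun l hl => ?_
    have hl' : l ≤ n := by simpa [Nat.lt_succ_iff] using hl
    simp only [cT, Prod.swap, Prod.fst, Prod.snd]
    have : q ^ (-(l : ℝ) * ((n : ℝ) - (l : ℝ))) = (q⁻¹) ^ ((n - l) * l) := by
      rw [inv_pow, ← Real.rpow_natCast, ← Real.rpow_neg hq.le]
      push_cast [Nat.cast_sub hl']
      congr 1
      ring
    rw [this]
  simp only [hS]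
  intro x hx
  have hx0 := hx.ne'
  have hq0 := hq.ne'
  set A := q ^ h₁ * t₁ with hAdef
  set B := q ^ h₂ * t₂ with hBdef
  have hA : A ≠ 0 := mul_ne_zero (Real.rpow_pos_of_pos hq _).ne' ht₁
  have hB : B ≠ 0 := mul_ne_zero (Real.rpow_pos_of_pos hq _).ne' ht₂
  set a := q ^ (lam + α₁) with hadef
  have ha : a ≠ 0 := (Real.rpow_pos_of_pos hq _).ne'
  set p := q ^ (1/2 : ℝ) with hpdef
  have hp0 : p ≠ 0 := (Real.rpow_pos_of_pos hq _).ne'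
  have hp : p * p = q := by
    rw [hpdef, ← Real.rpow_add hq]; norm_num
  set c := q ^ lam with hcdef
  have hc : c ≠ 0 := (Real.rpow_pos_of_pos hq _).ne'
  have haN : a * q ^ N = 1 := by
    rw [hadef, hNlam, ← Real.rpow_natCast, ← Real.rpow_add hq]; simp
  have e1 : q ^ (-lam - α₁ + 1/2) = p / a := by
    rw [hpdef, hadef, ← Real.rpow_sub hq]; congr 1; ring
  have e2 : q ^ (2 * lam + 1) = c * c * q := by
    rw [hcdef, Real.rpow_add hq, Real.rpow_one, two_mul, Real.rpow_add hq]
  have e3 : q ^ (-h₁ - 1/2) * t₁⁻¹ = (A * p)⁻¹ := by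
    rw [Real.rpow_sub hq, Real.rpow_neg hq.le, hAdef, mul_inv, mul_inv]; ring
  have e4 : q ^ (-h₂ - 1/2) * t₂⁻¹ = (B * p)⁻¹ := by
    rw [Real.rpow_sub hq, Real.rpow_neg hq.le, hBdef, mul_inv, mul_inv]; ring
  have e5 : q ^ (α₁ + 2 * lam - h₁ - h₂) * t₁⁻¹ * t₂⁻¹ = a * c * (A⁻¹ * B⁻¹) := by
    rw [Real.rpow_sub hq, Real.rpow_sub hq, show α₁ + 2 * lam = (lam + α₁) + lam by ring,
      Real.rpow_add hq (lam + α₁), hAdef, hBdef, mul_inv, mul_inv]; ring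
  have e6 : q ^ (lam + 1/2) = c * p := by rw [Real.rpow_add hq]
  have e7 : q ^ (-h₁) * t₁⁻¹ = A⁻¹ := by rw [Real.rpow_neg hq.le, hAdef, mul_inv]
  have e8 : q ^ (-h₂) * t₂⁻¹ = B⁻¹ := by rw [Real.rpow_neg hq.le, hBdef, mul_inv]
  have e9 : q ^ (-α₁) = c / a := by
    rw [hcdef, hadef, ← Real.rpow_sub hq]; congr 1; ring
  have e10 : (q * x) ^ (-α₁) = c / a * x ^ (-α₁) := by rw [Real.mul_rpow hq.le hx.le, e9]
  have e11 : (x / q) ^ (-α₁) = a / c * x ^ (-α₁) := by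
    rw [Real.div_rpow hx.le hq.le, e9]; field_simp
  have f1 : ∑ n ∈ Finset.range (N + 1), (p / a / (q * x)) ^ n * qPoch q a n * sT q A B n
      = ∑ n ∈ Finset.range (N + 1), (q⁻¹) ^ n * vT q p a A B x n := by
    refine Finset.sum_congr rfl fun n _ => ?_
    rw [vT, show p / a / (q * x) = q⁻¹ * (p / a / x) by field_simp, mul_pow]; ring
  have f2 : ∑ n ∈ Finset.range (N + 1), (p / a / (x / q)) ^ n * qPoch q a n * sT q A B n
      = ∑ n ∈ Finset.range (N + 1), q ^ n * vT q p a A B x n := by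
    refine Finset.sum_congr rfl fun n _ => ?_
    rw [vT, show p / a / (x / q) = q * (p / a / x) by field_simp, mul_pow]; ring
  have f3 : ∑ n ∈ Finset.range (N + 1), (p / a / x) ^ n * qPoch q a n * sT q A B n
      = ∑ n ∈ Finset.range (N + 1), vT q p a A B x n := rfl
  have key := vT_sum hq hq1 hp ha hA hB hx0 N
  have v1 : vT q p a A B x (N + 1) = 0 := by
    rw [vT, qPoch_zero_of haN (by omega)]; ring
  have v2 : vT q p a A B x (N + 2) = 0 := by
    rw [vT, qPoch_zero_of haN (by omega)]; ring
  rw [v1, v2] at key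
  simp only [mul_zero, sub_zero] at key
  simp only [e1, e2, e3, e4, e5, e6, e7, e8, e10, e11, f1, f2, f3]
  generalize x ^ (-α₁) = X
  rw [← mul_zero (c * X), ← key]
  simp only [Finset.mul_sum]
  rw [← Finset.sum_add_distrib, ← Finset.sum_sub_distrib]
  refine Finset.sum_congr rfl fun n _ => ?_
  generalize vT q p a A B x n = v
  rw [pow_succ q n, inv_pow]
  have hqn : q ^ n ≠ 0 := by positivity
  generalize q ^ n = y at *
  clear_value p c a A B
  subst hp
  field_simp
  ring
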